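/- Let d ≥ 1, fix x₀ ∈ ℝ^d, let A_1,…,A_d : ℝ^d → ℝ and V : ℝ^d → ℝ be smooth, set B_{kj} = ∂A_j/∂x_k − ∂A_k/∂x_j, and define the Poincaré gauge potential A^{(x₀)}_j(Z) = ∑_{k=1}^d (∫_0^1 B_{kj}(x₀ + τZ) τ dτ) Z_k. Fix a smooth u : ℝ^d → ℂ and Z ∈ ℝ^d, and for h ∈ ℝ set F(h) = −∑_{j=1}^d ((∂/∂Z_j − i A^{(x₀)}_j(h·))² u)(Z) + V(x₀ + hZ) u(Z). Then F is smooth in h and its first derivative at h = 0 is F′(0) = i ∑_{j,k=1}^d B_{kj}(x₀) Z_k (∂u/∂Z_j)(Z) + ( ∑_{j=1}^d (∂V/∂x_j)(x₀) Z_j ) u(Z). -/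

import Mathlib

open scoped BigOperators

lemma param_int_nat {H : Type} [NormedAddCommGroup H] [NormedSpace ℝ H] [ProperSpace H] (n : ℕ) :
    ∀ {E : Type} [NormedAddCommGroup E] [NormedSpace ℝ E] (f : H × ℝ → E),
      ContDiff ℝ n f → ContDiff ℝ n (fun x => ∫ t in (0:ℝ)..1, f (x, t)) := by
  induction n with
  | zero =>
    intro E _ _ f hf
    have hf' := hf.continuous
    refine contDiff_zero.2 ?_
    exact intervalIntegral.continuous_parametric_intervalIntegral_of_continuous' (f := fun x t => f (x, t)) hf' 0 1
  | succ n ih =>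
    intro E _ _ f hf
    have h1 : ContDiff ℝ n (fun p : H × ℝ => (fderiv ℝ f p).comp (ContinuousLinearMap.inl ℝ H ℝ)) := by
      have : ContDiff ℝ n (fderiv ℝ f) := hf.fderiv_right (by norm_cast)
      exact this.clm_comp contDiff_const
    have hd : Differentiable ℝ f := hf.differentiable (by norm_cast)
    have hc := hf.continuous
    have hc1 := h1.continuous
    have key : ∀ x, HasFDerivAt (fun x => ∫ t in (0:ℝ)..1, f (x, t))
        (∫ t in (0:ℝ)..1, (fderiv ℝ f (x, t)).comp (ContinuousLinearMap.inl ℝ H ℝ)) x := by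
      intro x
      obtain ⟨C, hC⟩ := ((isCompact_closedBall x 1).prod (isCompact_Icc (a := (0:ℝ)) (b := 1))).exists_bound_of_continuousOn
        hc1.continuousOn
      refine intervalIntegral.hasFDerivAt_integral_of_dominated_of_fderiv_le (𝕜 := ℝ)
        (F := fun x t => f (x, t))
        (F' := fun x t => (fderiv ℝ f (x, t)).comp (ContinuousLinearMap.inl ℝ H ℝ))
        (s := Metric.closedBall x 1) (bound := fun _ => C)
        (Metric.closedBall_mem_nhds x one_pos) ?_ ?_ ?_ ?_ ?_ ?_
      · refine Filter.Eventually.of_forall fun y => ?_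
        exact (hc.comp (by fun_prop : Continuous fun t : ℝ => (y, t))).aestronglyMeasurable
      · exact (hc.comp (by fun_prop : Continuous fun t : ℝ => (x, t))).intervalIntegrable _ _
      · exact (hc1.comp (by fun_prop : Continuous fun t : ℝ => (x, t))).aestronglyMeasurable
      · refine Filter.Eventually.of_forall fun t ht y hy => ?_
        rw [Set.uIoc_of_le zero_le_one] at ht
        exact hC (y, t) ⟨hy, ht.1.le, ht.2⟩
      · simp
      · refine Filter.Eventually.of_forall fun t ht y hy => ?_
        exact (hd (y, t)).hasFDerivAt.comp y (hasFDerivAt_prodMk_left y t)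
    rw [show ((n + 1 : ℕ) : WithTop ℕ∞) = (n : WithTop ℕ∞) + 1 by norm_cast,
      contDiff_succ_iff_fderiv]
    refine ⟨fun x => (key x).differentiableAt, by simp, ?_⟩
    rw [show fderiv ℝ (fun x => ∫ t in (0:ℝ)..1, f (x, t)) = _ from funext fun x => (key x).fderiv]
    exact ih _ h1

lemma param_int {H : Type} [NormedAddCommGroup H] [NormedSpace ℝ H] [ProperSpace H]
    {E : Type} [NormedAddCommGroup E] [NormedSpace ℝ E] (f : H × ℝ → E)
    (hf : ContDiff ℝ (⊤ : ℕ∞) f) :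
    ContDiff ℝ (⊤ : ℕ∞) (fun x => ∫ t in (0:ℝ)..1, f (x, t)) :=
  contDiff_infty.2 fun n => param_int_nat n f (contDiff_infty.1 hf n)

/-- The first-order coefficient `𝓗^{(1)}` in the expansion of the rescaled magnetic
Schrödinger operator in the Poincaré gauge:
`F'(0) = i ∑_{j,k} B_{kj}(x₀) Z_k ∂u/∂Z_j(Z) + (∑_j (∂V/∂x_j)(x₀) Z_j) u(Z)`. -/
theorem rescaled_operator_first_order_coefficient
    (d : ℕ) (hd : 1 ≤ d) (x₀ : Fin d → ℝ)
    (A : Fin d → (Fin d → ℝ) → ℝ) (hA : ∀ j, ContDiff ℝ (⊤ : ℕ∞) (A j))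
    (V : (Fin d → ℝ) → ℝ) (hV : ContDiff ℝ (⊤ : ℕ∞) V)
    (B : Fin d → Fin d → (Fin d → ℝ) → ℝ)
    (hB : ∀ k j x, B k j x =
      fderiv ℝ (A j) x (Pi.single k 1) - fderiv ℝ (A k) x (Pi.single j 1))
    (A' : Fin d → (Fin d → ℝ) → ℝ)
    (hA' : ∀ j Z, A' j Z = ∑ k, (∫ τ in (0:ℝ)..1, B k j (x₀ + τ • Z) * τ) * Z k)
    (P : ℝ → Fin d → ((Fin d → ℝ) → ℂ) → ((Fin d → ℝ) → ℂ))
    (hP : ∀ h j s Z, P h j s Z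
      = fderiv ℝ s Z (Pi.single j 1) - Complex.I * (A' j (h • Z) : ℂ) * s Z)
    (u : (Fin d → ℝ) → ℂ) (hu : ContDiff ℝ (⊤ : ℕ∞) u)
    (Z : Fin d → ℝ)
    (F : ℝ → ℂ)
    (hF : ∀ h : ℝ, F h
      = -(∑ j, P h j (P h j u) Z) + (V (x₀ + h • Z) : ℂ) * u Z) :
    ContDiff ℝ (⊤ : ℕ∞) F ∧
    deriv F 0
      = Complex.I * (∑ j, ∑ k, ((B k j x₀ * Z k : ℝ) : ℂ) * fderiv ℝ u Z (Pi.single j 1))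
        + (((∑ j, fderiv ℝ V x₀ (Pi.single j 1) * Z j : ℝ)) : ℂ) * u Z := by
  have hBs : ∀ k j, ContDiff ℝ (⊤ : ℕ∞) (B k j) := by
    intro k j
    rw [show B k j = _ from funext (hB k j)]
    exact (((hA j).fderiv_right (m := (⊤ : ℕ∞)) (by norm_cast)).clm_apply contDiff_const).sub
      (((hA k).fderiv_right (m := (⊤ : ℕ∞)) (by norm_cast)).clm_apply contDiff_const)
  set G : Fin d → Fin d → (Fin d → ℝ) → ℝ :=
    fun k j W => ∫ τ in (0:ℝ)..1, B k j (x₀ + τ • W) * τ with hG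
  have hGs : ∀ k j, ContDiff ℝ (⊤ : ℕ∞) (G k j) := by
    intro k j
    refine param_int (fun p : (Fin d → ℝ) × ℝ => B k j (x₀ + p.2 • p.1) * p.2) ?_
    exact ((hBs k j).comp (by fun_prop)).mul contDiff_snd
  have hG0 : ∀ k j, G k j 0 = B k j x₀ / 2 := by
    intro k j
    simp only [hG, smul_zero, add_zero]
    rw [intervalIntegral.integral_const_mul, integral_id]
    ring
  have hA's : ∀ j, ContDiff ℝ (⊤ : ℕ∞) (A' j) := by
    intro j
    rw [show A' j = _ from funext (hA' j)]
    exact ContDiff.sum fun k _ => (hGs k j).mul (by fun_prop)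
  have hA0 : ∀ j, A' j 0 = 0 := by intro j; simp [hA']
  have hdA0 : ∀ j v, fderiv ℝ (A' j) 0 v = ∑ k, B k j x₀ / 2 * v k := by
    intro j v
    have : HasFDerivAt (A' j) (∑ k, (G k j 0 • (ContinuousLinearMap.proj k : (Fin d → ℝ) →L[ℝ] ℝ) + ((0 : Fin d → ℝ) k) • fderiv ℝ (G k j) 0)) 0 := by
      rw [show A' j = _ from funext (hA' j)]
      refine HasFDerivAt.fun_sum fun k _ => ?_
      exact ((hGs k j).differentiable (by simp) 0).hasFDerivAt.mul (hasFDerivAt_apply k 0)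
    rw [this.fderiv]
    simp [hG0]
  have hdiag : ∀ j, fderiv ℝ (A' j) 0 (Pi.single j 1) = 0 := by
    intro j
    rw [hdA0]
    refine Finset.sum_eq_zero fun k _ => ?_
    by_cases h : k = j
    · subst h; simp [hB]
    · simp [h]
  have hPu : ∀ h j, P h j (P h j u) Z =
      fderiv ℝ (fun W => fderiv ℝ u W (Pi.single j 1)) Z (Pi.single j 1)
      - Complex.I * (((h * fderiv ℝ (A' j) (h • Z) (Pi.single j 1) : ℝ) : ℂ) * u Z
          + 2 * (A' j (h • Z) : ℂ) * fderiv ℝ u Z (Pi.single j 1))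
      - (A' j (h • Z) : ℂ) ^ 2 * u Z := by
    intro h j
    have e1 : HasFDerivAt (fun W : Fin d → ℝ => ((A' j (h • W) : ℝ) : ℂ))
        (Complex.ofRealCLM.comp ((fderiv ℝ (A' j) (h • Z)).comp (h • ContinuousLinearMap.id ℝ (Fin d → ℝ)))) Z := by
      refine Complex.ofRealCLM.hasFDerivAt.comp Z ?_
      exact ((hA's j).differentiable (by simp) (h • Z)).hasFDerivAt.comp Z
        ((hasFDerivAt_id Z).const_smul h)
    have e2 : DifferentiableAt ℝ (fun W => fderiv ℝ u W (Pi.single j 1)) Z :=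
      (((hu.fderiv_right (m := (⊤ : ℕ∞)) (by norm_cast)).clm_apply contDiff_const).differentiable
        (by simp)) Z
    have e3 : DifferentiableAt ℝ u Z := hu.differentiable (by simp) Z
    have e4 := e2.hasFDerivAt.sub ((e1.const_mul Complex.I).mul e3.hasFDerivAt)
    rw [hP, show P h j u = _ from funext (hP h j u)]
    have e5 := e4.fderiv
    erw [e5]
    simp
    linear_combination (A' j (h • Z) : ℂ) ^ 2 * u Z * Complex.I_sq
  have hFe : F = fun h => -(∑ j, (fderiv ℝ (fun W => fderiv ℝ u W (Pi.single j 1)) Z (Pi.single j 1)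
      - Complex.I * (((h * fderiv ℝ (A' j) (h • Z) (Pi.single j 1) : ℝ) : ℂ) * u Z
          + 2 * (A' j (h • Z) : ℂ) * fderiv ℝ u Z (Pi.single j 1))
      - (A' j (h • Z) : ℂ) ^ 2 * u Z)) + (V (x₀ + h • Z) : ℂ) * u Z := by
    funext h
    rw [hF]
    simp only [hPu]
  have sm : ContDiff ℝ (⊤ : ℕ∞) (fun h : ℝ => h • Z) := by fun_prop
  have sA : ∀ j, ContDiff ℝ (⊤ : ℕ∞) (fun h : ℝ => A' j (h • Z)) := fun j => (hA's j).comp sm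
  have sD : ∀ j, ContDiff ℝ (⊤ : ℕ∞) (fun h : ℝ => fderiv ℝ (A' j) (h • Z) (Pi.single j 1)) :=
    fun j => (((hA's j).fderiv_right (m := (⊤ : ℕ∞)) (by norm_cast)).comp sm).clm_apply contDiff_const
  have sV : ContDiff ℝ (⊤ : ℕ∞) (fun h : ℝ => V (x₀ + h • Z)) := hV.comp (contDiff_const.add sm)
  have sR : ∀ {f : ℝ → ℝ}, ContDiff ℝ (⊤ : ℕ∞) f → ContDiff ℝ (⊤ : ℕ∞) (fun h => (f h : ℂ)) :=
    fun hf => Complex.ofRealCLM.contDiff.comp hf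
  constructor
  · rw [hFe]
    refine ((ContDiff.sum fun j _ => ?_).neg).add ((sR sV).mul contDiff_const)
    refine (contDiff_const.sub (contDiff_const.mul ?_)).sub (((sR (sA j)).pow 2).mul contDiff_const)
    exact ((sR (contDiff_id.mul (sD j))).mul contDiff_const).add
      ((contDiff_const.mul (sR (sA j))).mul contDiff_const)
  · have dsm : HasDerivAt (fun h : ℝ => h • Z) Z 0 := by
      simpa using (hasDerivAt_id (0:ℝ)).smul_const Z
    have dA : ∀ j, HasDerivAt (fun h : ℝ => ((A' j (h • Z) : ℝ) : ℂ))
        ((∑ k, B k j x₀ / 2 * Z k : ℝ) : ℂ) 0 := by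
      intro j
      rw [← hdA0]
      refine HasDerivAt.ofReal_comp ?_
      have h0 : HasFDerivAt (A' j) (fderiv ℝ (A' j) 0) ((0:ℝ) • Z) := by
        rw [zero_smul]; exact ((hA's j).differentiable (by simp) 0).hasFDerivAt
      exact h0.comp_hasDerivAt (0:ℝ) dsm
    have dD : ∀ j, HasDerivAt (fun h : ℝ =>
        ((h * fderiv ℝ (A' j) (h • Z) (Pi.single j 1) : ℝ) : ℂ)) 0 0 := by
      intro j
      have := ((hasDerivAt_id (0:ℝ)).mul
        ((sD j).differentiable (by simp) 0).hasDerivAt).ofReal_comp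
      simpa [hdiag] using this
    have dV : HasDerivAt (fun h : ℝ => ((V (x₀ + h • Z) : ℝ) : ℂ))
        ((∑ j, fderiv ℝ V x₀ (Pi.single j 1) * Z j : ℝ) : ℂ) 0 := by
      have hs : fderiv ℝ V x₀ Z = ∑ j, fderiv ℝ V x₀ (Pi.single j 1) * Z j := by
        conv_lhs => rw [pi_eq_sum_univ' Z, map_sum]
        refine Finset.sum_congr rfl fun j _ => ?_
        rw [map_smul, smul_eq_mul, mul_comm]
      rw [← hs]
      refine HasDerivAt.ofReal_comp ?_
      have h0 : HasFDerivAt V (fderiv ℝ V x₀) (x₀ + (0:ℝ) • Z) := by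
        rw [zero_smul, add_zero]; exact (hV.differentiable (by simp) x₀).hasFDerivAt
      exact h0.comp_hasDerivAt (0:ℝ) (dsm.const_add x₀)
    have dF := ((HasDerivAt.fun_sum (u := Finset.univ) fun j _ =>
      (((((dD j).mul_const (u Z)).add
        (((dA j).const_mul 2).mul_const (fderiv ℝ u Z (Pi.single j 1)))).const_mul
          Complex.I).const_sub
          (fderiv ℝ (fun W => fderiv ℝ u W (Pi.single j 1)) Z (Pi.single j 1))).sub
        (((dA j).pow 2).mul_const (u Z))).neg).add (dV.mul_const (u Z))
    rw [hFe]
    refine (dF.deriv).trans ?_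
    congr 1
    rw [← Finset.sum_neg_distrib, Finset.mul_sum]
    refine Finset.sum_congr rfl fun j _ => ?_
    simp [hA0]
    rw [← Finset.sum_mul, Finset.mul_sum]
    congr 2
    funext k
    ring
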